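/- Fix n, k ∈ ℕ, d ∈ {1,…,n} and η ∈ [0,1). For all ε, δ ∈ (0,1), the randomized query complexity of the class F_{n,d} ∩ J_{n,k,η} satisfies Q_r(F_{n,d} ∩ J_{n,k,η}, 2η + ε, δ) ≤ ⌈ (18/ε) · Σ_{r=0}^{min(d,k)} C(k,r) · log( (2/δ) · Σ_{r=0}^{min(d,k)} C(n,r) ) ⌉. -/

import Mathlib

/-!
Write `m = min d k`, `M = ∑_{r ≤ m} C(k,r)`, `N = ∑_{r ≤ m} C(n,r)` and `b = √(ε / (9M))`.
The learner forms the empirical Fourier coefficients `α_S` for `|S| ≤ m`, keeps those with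
`|α_S| ≥ 2b`, and outputs the corresponding Walsh polynomial.

* Hoeffding's inequality and a union bound over the `N` sets show that, outside a fraction `δ` of
  the samples, `|α_S - f̂(S)| ≤ b` for all `|S| ≤ m` at once (`card_bad_le`, `card_good_ge`);
  `Q ≥ (2 / b²) log (2N / δ)` is exactly what is needed.
* If `f` is `η`-close to a junta on `σ`, then `∑_{S ⊄ σ} f̂(S)² ≤ η` (`junta_tail_le`), because the
  junta has no Fourier mass outside the subsets of `σ`. At most `M` subsets of `σ` have size at
  most `m`, and the larger ones carry no coefficient of `f`, by the degree bound.
* A thresholded coefficient errs by at most `3b` everywhere. Off the subsets of `σ` it errs by at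
  most `|f̂(S)|`: a kept one has error at most `b ≤ |f̂(S)|` (`threshold_sq_le`).

By Parseval the squared error is therefore at most `9 M b² + η = ε + η`.
-/

open Finset

namespace EIS

/-- Walsh function `w_S(x) = ∏_{i ∈ S} x_i`, with points of the hypercube encoded by
`Fin n → Bool` (`true ↦ 1`, `false ↦ -1`). -/
noncomputable def walsh {n : ℕ} (S : Finset (Fin n)) (x : Fin n → Bool) : ℝ :=
  ∏ i ∈ S, (if x i then (1 : ℝ) else -1)

/-- Fourier–Walsh coefficient `f̂(S) = E_x f(x) w_S(x)`. -/
noncomputable def fourierCoeff {n : ℕ} (f : (Fin n → Bool) → ℝ) (S : Finset (Fin n)) : ℝ :=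
  (∑ x : Fin n → Bool, f x * walsh S x) / 2 ^ n

/-- `f` has degree at most `d`: all Fourier coefficients above level `d` vanish. -/
def DegLE (n d : ℕ) (f : (Fin n → Bool) → ℝ) : Prop :=
  ∀ S : Finset (Fin n), d < S.card → fourierCoeff f S = 0

/-- Squared L₂ distance `‖f - g‖²_{L₂} = E_x (f(x) - g(x))²` w.r.t. the uniform measure. -/
noncomputable def dist2 {n : ℕ} (f g : (Fin n → Bool) → ℝ) : ℝ :=
  (∑ x : Fin n → Bool, (f x - g x) ^ 2) / 2 ^ n

/-- `f` takes values in `[-1, 1]`. -/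
def Bounded1 {n : ℕ} (f : (Fin n → Bool) → ℝ) : Prop := ∀ x, |f x| ≤ 1

/-- `f` is Boolean, i.e. takes values in `{-1, 1}`. -/
def BoolValued {n : ℕ} (f : (Fin n → Bool) → ℝ) : Prop := ∀ x, f x = 1 ∨ f x = -1

/-- The class `F_{n,d}` of `[-1,1]`-valued functions of degree at most `d`. -/
def Fclass (n d : ℕ) : Set ((Fin n → Bool) → ℝ) := {f | Bounded1 f ∧ DegLE n d f}

/-- The class `B_{n,d}` of Boolean functions of degree at most `d`. -/
def Bclass (n d : ℕ) : Set ((Fin n → Bool) → ℝ) := {f | BoolValued f ∧ DegLE n d f}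

/-- The Fourier tail `Σ_{|S| > d} f̂(S)²`. -/
noncomputable def fourierTail (n d : ℕ) (f : (Fin n → Bool) → ℝ) : ℝ :=
  ∑ S ∈ Finset.univ.filter (fun S : Finset (Fin n) => d < S.card), fourierCoeff f S ^ 2

/-- A deterministic adaptive learning algorithm: `query` maps the history of
(queried point, observed value) pairs to the next query point (in particular `query []` is the
fixed first query point), and `output` maps the final history to the hypothesis function. -/
structure DetAlgo (n : ℕ) where
  query : List ((Fin n → Bool) × ℝ) → (Fin n → Bool)
  output : List ((Fin n → Bool) × ℝ) → ((Fin n → Bool) → ℝ)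

/-- The history of the run of a deterministic adaptive algorithm `A` on the unknown function `f`
after `q` queries. -/
def runHist {n : ℕ} (A : DetAlgo n) (f : (Fin n → Bool) → ℝ) : ℕ → List ((Fin n → Bool) × ℝ)
  | 0 => []
  | q + 1 =>
      let h := runHist A f q
      h ++ [(A.query h, f (A.query h))]

/-- `A` learns the class `F` with `Q` queries and L₂-error `ε`:
for every `f ∈ F` the produced hypothesis `h` satisfies `‖h - f‖²_{L₂} ≤ ε`. -/
def DetLearns {n : ℕ} (A : DetAlgo n) (Q : ℕ) (F : Set ((Fin n → Bool) → ℝ)) (ε : ℝ) : Prop :=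
  ∀ f ∈ F, dist2 (A.output (runHist A f Q)) f ≤ ε

/-- The random-example algorithm `H` (a map from `Q` labeled examples to a hypothesis) learns the
class `F` with L₂-error `ε` and confidence `1 - δ`: for every `f ∈ F`, the fraction of
tuples `(X₁, …, X_Q)` of sample points (equivalently, the probability with respect to i.i.d.
uniform samples) for which `‖H((X₁, f(X₁)), …, (X_Q, f(X_Q))) - f‖²_{L₂} ≤ ε` is at
least `1 - δ`. -/
def RandLearns {n : ℕ} (Q : ℕ)
    (H : (Fin Q → (Fin n → Bool) × ℝ) → ((Fin n → Bool) → ℝ))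
    (F : Set ((Fin n → Bool) → ℝ)) (ε δ : ℝ) : Prop :=
  ∀ f ∈ F,
    (1 - δ) * ((2 : ℝ) ^ n) ^ Q ≤
      (Nat.card {X : Fin Q → Fin n → Bool //
        dist2 (H fun j => (X j, f (X j))) f ≤ ε} : ℝ)

/-- `g` depends only on the coordinates in `σ`. -/
def DependsOn {n : ℕ} (σ : Finset (Fin n)) (g : (Fin n → Bool) → ℝ) : Prop :=
  ∀ x y : Fin n → Bool, (∀ i ∈ σ, x i = y i) → g x = g y

/-- `f` is a `(k, η)`-junta. -/
def Junta (n k : ℕ) (η : ℝ) (f : (Fin n → Bool) → ℝ) : Prop :=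
  ∃ σ : Finset (Fin n), σ.card ≤ k ∧
    ∃ g : (Fin n → Bool) → ℝ, DependsOn σ g ∧ dist2 f g ≤ η

/-- The class `J_{n,k,η}` of `[-1,1]`-valued `(k, η)`-juntas. -/
def Jclass (n k : ℕ) (η : ℝ) : Set ((Fin n → Bool) → ℝ) := {f | Bounded1 f ∧ Junta n k η f}

end EIS

open EIS

namespace EIS

/-! ### Walsh analysis on the hypercube -/

/-- Orthogonality of the Walsh system. -/
lemma sum_walsh_mul {n : ℕ} (S T : Finset (Fin n)) :
    ∑ x : Fin n → Bool, walsh S x * walsh T x = if S = T then (2 : ℝ) ^ n else 0 := by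
  have h1 : ∀ (S : Finset (Fin n)) (x : Fin n → Bool),
      walsh S x = ∏ i, if i ∈ S then (if x i then (1 : ℝ) else -1) else 1 := by
    intro S x
    simp [walsh, Finset.prod_ite_mem]
  have h2 : ∑ x : Fin n → Bool, walsh S x * walsh T x
      = ∏ i : Fin n, ∑ c : Bool, ((if i ∈ S then (if c then (1 : ℝ) else -1) else 1) *
          (if i ∈ T then (if c then (1 : ℝ) else -1) else 1)) := by
    rw [Finset.prod_univ_sum, Fintype.piFinset_univ]
    refine Finset.sum_congr rfl fun x _ => ?_
    rw [h1, h1, Finset.prod_mul_distrib]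
  rw [h2]
  split_ifs with h
  · subst h
    rw [Finset.prod_congr rfl (g := fun _ => (2 : ℝ))]
    · simp
    · intro i _
      by_cases hi : i ∈ S <;> simp [hi] <;> norm_num
  · obtain ⟨i, hi⟩ : ∃ i, ¬ (i ∈ S ↔ i ∈ T) := by
      by_contra! hc
      exact h (Finset.ext hc)
    apply Finset.prod_eq_zero (Finset.mem_univ i)
    by_cases h1 : i ∈ S <;> by_cases h2 : i ∈ T <;> simp_all

/-- The reproducing kernel of the Walsh system is the diagonal: completeness. -/
lemma sum_walsh_kernel {n : ℕ} (x y : Fin n → Bool) :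
    ∑ S : Finset (Fin n), walsh S x * walsh S y = if x = y then (2 : ℝ) ^ n else 0 := by
  have h2 : ∑ S : Finset (Fin n), walsh S x * walsh S y
      = ∏ i : Fin n, (1 + (if x i then (1 : ℝ) else -1) * (if y i then (1 : ℝ) else -1)) := by
    rw [Finset.prod_one_add, Finset.powerset_univ]
    refine Finset.sum_congr rfl fun S _ => ?_
    rw [walsh, walsh, Finset.prod_mul_distrib]
  rw [h2]
  split_ifs with h
  · subst h
    rw [Finset.prod_congr rfl (g := fun _ => (2 : ℝ))]
    · simp
    · intro i _
      cases x i <;> norm_num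
  · obtain ⟨i, hi⟩ := Function.ne_iff.mp h
    apply Finset.prod_eq_zero (Finset.mem_univ i)
    cases hx : x i <;> cases hy : y i <;> simp_all

/-- Fourier inversion. -/
lemma sum_fourierCoeff_mul_walsh {n : ℕ} (f : (Fin n → Bool) → ℝ) (y : Fin n → Bool) :
    ∑ S, fourierCoeff f S * walsh S y = f y := by
  have : ∀ S, fourierCoeff f S * walsh S y
      = (∑ x, f x * (walsh S x * walsh S y)) / 2 ^ n := by
    intro S
    rw [fourierCoeff, div_mul_eq_mul_div, Finset.sum_mul]
    simp only [mul_assoc]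
  simp only [this]
  rw [← Finset.sum_div, Finset.sum_comm]
  simp only [← Finset.mul_sum, sum_walsh_kernel]
  simp

/-- Parseval's identity for a Walsh polynomial with prescribed coefficients. -/
lemma sum_sq_walsh_poly {n : ℕ} (c : Finset (Fin n) → ℝ) :
    ∑ x : Fin n → Bool, (∑ S, c S * walsh S x) ^ 2 = 2 ^ n * ∑ S, c S ^ 2 := by
  have : ∀ x : Fin n → Bool, (∑ S, c S * walsh S x) ^ 2
      = ∑ S, ∑ T, c S * c T * (walsh S x * walsh T x) := by
    intro x
    rw [sq, Finset.sum_mul_sum]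
    refine Finset.sum_congr rfl fun S _ => Finset.sum_congr rfl fun T _ => by ring
  simp only [this]
  rw [Finset.sum_comm, Finset.mul_sum]
  refine Finset.sum_congr rfl fun S _ => ?_
  rw [Finset.sum_comm]
  simp only [← Finset.mul_sum, sum_walsh_mul]
  simp
  ring

lemma dist2_walsh_poly {n : ℕ} (a : Finset (Fin n) → ℝ) (f : (Fin n → Bool) → ℝ) :
    dist2 (fun x => ∑ S, a S * walsh S x) f = ∑ S, (a S - fourierCoeff f S) ^ 2 := by
  have : ∀ x, (∑ S, a S * walsh S x) - f x
      = ∑ S, (a S - fourierCoeff f S) * walsh S x := by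
    intro x
    simp only [sub_mul, Finset.sum_sub_distrib, sum_fourierCoeff_mul_walsh]
  simp only [dist2, this]
  rw [sum_sq_walsh_poly]
  field_simp

lemma dist2_eq_sum_fourierCoeff {n : ℕ} (f g : (Fin n → Bool) → ℝ) :
    dist2 f g = ∑ S, (fourierCoeff f S - fourierCoeff g S) ^ 2 := by
  rw [← dist2_walsh_poly]
  simp only [sum_fourierCoeff_mul_walsh]

lemma abs_walsh {n : ℕ} (S : Finset (Fin n)) (x : Fin n → Bool) : |walsh S x| = 1 := by
  rw [walsh, Finset.abs_prod]
  refine Finset.prod_eq_one fun i _ => ?_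
  split_ifs <;> simp

/-- A function of the coordinates in `σ` has no Fourier mass outside the subsets of `σ`. -/
lemma fourierCoeff_eq_zero_of_dependsOn {n : ℕ} {σ S : Finset (Fin n)}
    {g : (Fin n → Bool) → ℝ} (hg : DependsOn σ g) (hS : ¬ S ⊆ σ) : fourierCoeff g S = 0 := by
  obtain ⟨i, hiS, hiσ⟩ := Finset.not_subset.mp hS
  -- Flipping a coordinate `i ∈ S \ σ` preserves `g` and changes the sign of `w_S`.
  let e : (Fin n → Bool) → (Fin n → Bool) := fun x => Function.update x i (!x i)
  have he : Function.Involutive e := by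
    intro x
    simp [e]
  have hw : ∀ x, walsh S (e x) = - walsh S x := by
    intro x
    rw [walsh, walsh, ← Finset.mul_prod_erase S _ hiS, ← Finset.mul_prod_erase S _ hiS]
    have : ∏ j ∈ S.erase i, (if e x j then (1 : ℝ) else -1)
        = ∏ j ∈ S.erase i, (if x j then (1 : ℝ) else -1) := by
      refine Finset.prod_congr rfl fun j hj => ?_
      simp [e, Function.update_of_ne (Finset.ne_of_mem_erase hj)]
    rw [this]
    cases hx : x i <;> simp [e, hx]
  have hgx : ∀ x, g (e x) = g x := by
    intro x
    refine hg _ _ fun j hj => ?_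
    have : j ≠ i := fun h => hiσ (h ▸ hj)
    simp [e, Function.update_of_ne this]
  have h : ∑ x, g x * walsh S x = - ∑ x, g x * walsh S x := by
    conv_lhs => rw [← Equiv.sum_comp he.toPerm]
    rw [← Finset.sum_neg_distrib]
    refine Finset.sum_congr rfl fun x _ => ?_
    simp [hw, hgx]
  have h0 : ∑ x, g x * walsh S x = 0 := by linarith
  simp [fourierCoeff, h0]

lemma junta_tail_le {n : ℕ} {σ : Finset (Fin n)} {f g : (Fin n → Bool) → ℝ} {η : ℝ}
    (hg : DependsOn σ g) (hfg : dist2 f g ≤ η) :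
    ∑ S with ¬ S ⊆ σ, fourierCoeff f S ^ 2 ≤ η := by
  refine le_trans ?_ hfg
  rw [dist2_eq_sum_fourierCoeff]
  calc ∑ S with ¬ S ⊆ σ, fourierCoeff f S ^ 2
      = ∑ S with ¬ S ⊆ σ, (fourierCoeff f S - fourierCoeff g S) ^ 2 := by
        refine Finset.sum_congr rfl fun S hS => ?_
        rw [fourierCoeff_eq_zero_of_dependsOn hg (Finset.mem_filter.mp hS).2, sub_zero]
    _ ≤ _ := Finset.sum_le_sum_of_subset_of_nonneg (Finset.filter_subset _ _)
        fun _ _ _ => sq_nonneg _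

/-! ### Hoeffding's inequality for uniform samples, in counting form -/

/-- Hoeffding's lemma for the uniform distribution on a finite set. -/
lemma sum_exp_le {Ω : Type*} [Fintype Ω] [Nonempty Ω] (Z : Ω → ℝ) (hZ : ∀ x, |Z x| ≤ 1)
    (t : ℝ) :
    ∑ x, Real.exp (t * (Z x - (∑ y, Z y) / Fintype.card Ω))
      ≤ Fintype.card Ω * Real.exp (t ^ 2 / 2) := by
  let _ : MeasurableSpace Ω := ⊤
  have : DiscreteMeasurableSpace Ω := ⟨fun _ => trivial⟩
  let μ : MeasureTheory.Measure Ω := (PMF.uniformOfFintype Ω).toMeasure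
  have hint : ∀ F : Ω → ℝ, ∫ x, F x ∂μ = (∑ x, F x) / Fintype.card Ω := by
    intro F
    rw [PMF.integral_eq_sum]
    simp only [PMF.uniformOfFintype_apply, ENNReal.toReal_inv, ENNReal.toReal_natCast, smul_eq_mul]
    rw [← Finset.mul_sum, div_eq_inv_mul]
  have h := ProbabilityTheory.hasSubgaussianMGF_of_mem_Icc (μ := μ) (X := Z) (a := -1) (b := 1)
    (measurable_of_finite Z).aemeasurable
    (Filter.Eventually.of_forall fun x => abs_le.mp (hZ x))
  have h2 := h.mgf_le t
  rw [ProbabilityTheory.mgf, hint, hint] at h2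
  have hc : (0 : ℝ) < Fintype.card Ω := by exact_mod_cast Fintype.card_pos
  rw [div_le_iff₀ hc] at h2
  have h3 : ((((‖(1 : ℝ) - -1‖₊ / 2) ^ 2 : NNReal)) : ℝ) = 1 := by
    push_cast
    norm_num
  rw [h3, one_mul] at h2
  linarith

lemma card_upper_tail_le {Ω : Type*} [Fintype Ω] [Nonempty Ω] (Z : Ω → ℝ) (hZ : ∀ x, |Z x| ≤ 1)
    (Q : ℕ) {b : ℝ} (hb : 0 ≤ b) :
    (#{X : Fin Q → Ω | Q * b ≤ ∑ j, (Z (X j) - (∑ y, Z y) / Fintype.card Ω)} : ℝ)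
      ≤ (Fintype.card Ω : ℝ) ^ Q * Real.exp (-(Q * b ^ 2 / 2)) := by
  set m : ℝ := (∑ y, Z y) / Fintype.card Ω with hm
  set A : Finset (Fin Q → Ω) := {X | Q * b ≤ ∑ j, (Z (X j) - m)} with hA
  -- Chernoff's bound with the optimal parameter `t = b`.
  have h1 : (#A : ℝ) * Real.exp (Q * b ^ 2)
      ≤ (Fintype.card Ω * Real.exp (b ^ 2 / 2)) ^ Q := by
    calc (#A : ℝ) * Real.exp (Q * b ^ 2) = ∑ X ∈ A, Real.exp (Q * b ^ 2) := by
          rw [Finset.sum_const, nsmul_eq_mul]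
      _ ≤ ∑ X ∈ A, ∏ j, Real.exp (b * (Z (X j) - m)) := by
          refine Finset.sum_le_sum fun X hX => ?_
          rw [← Real.exp_sum, ← Finset.mul_sum, Real.exp_le_exp]
          have := mul_le_mul_of_nonneg_left (Finset.mem_filter.mp hX).2 hb
          nlinarith
      _ ≤ ∑ X : Fin Q → Ω, ∏ j, Real.exp (b * (Z (X j) - m)) :=
          Finset.sum_le_sum_of_subset_of_nonneg (Finset.subset_univ _)
            fun _ _ _ => by positivity
      _ = (∑ x, Real.exp (b * (Z x - m))) ^ Q := by rw [Fintype.sum_pow]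
      _ ≤ _ := pow_le_pow_left₀ (by positivity) (sum_exp_le Z hZ b) Q
  rw [mul_pow, ← Real.exp_nat_mul] at h1
  have h2 : (#A : ℝ) = (#A : ℝ) * Real.exp (Q * b ^ 2) * Real.exp (-(Q * b ^ 2)) := by
    rw [mul_assoc, ← Real.exp_add]
    simp
  rw [h2]
  calc _ ≤ _ := mul_le_mul_of_nonneg_right h1 (Real.exp_pos _).le
    _ = _ := by
      rw [mul_assoc, ← Real.exp_add]
      ring_nf

/-- Empirical Fourier coefficient `α_S` of a labelled sample; it is `0` when `Q = 0`. -/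
noncomputable def empCoeff {n Q : ℕ} (D : Fin Q → (Fin n → Bool) × ℝ) (S : Finset (Fin n)) : ℝ :=
  (∑ j, (D j).2 * walsh S (D j).1) / Q

lemma card_bad_le {n Q : ℕ} (hQ : 0 < Q) {f : (Fin n → Bool) → ℝ} (hf : Bounded1 f)
    (S : Finset (Fin n)) {b : ℝ} (hb : 0 ≤ b) :
    (#{X : Fin Q → Fin n → Bool |
        b < |empCoeff (fun j => (X j, f (X j))) S - fourierCoeff f S|} : ℝ)
      ≤ 2 * (((2 : ℝ) ^ n) ^ Q * Real.exp (-(Q * b ^ 2 / 2))) := by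
  have hZ : ∀ x, |f x * walsh S x| ≤ 1 := by
    intro x
    rw [abs_mul, abs_walsh, mul_one]
    exact hf x
  have hQ' : (0 : ℝ) < Q := by exact_mod_cast hQ
  have hc : ((Fintype.card (Fin n → Bool) : ℕ) : ℝ) = 2 ^ n := by simp
  have h1 := card_upper_tail_le (fun x => f x * walsh S x) hZ Q hb
  have h2 := card_upper_tail_le (fun x => -(f x * walsh S x)) (by simpa using hZ) Q hb
  rw [hc] at h1 h2
  refine le_trans ?_ (le_trans (add_le_add h1 h2) (by linarith))
  rw [← Nat.cast_add, Nat.cast_le]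
  refine le_trans (Finset.card_le_card fun X hX => ?_) (Finset.card_union_le _ _)
  have hX := (Finset.mem_filter.mp hX).2
  simp only [Finset.mem_union, Finset.mem_filter, Finset.mem_univ, true_and]
  have e : empCoeff (fun j => (X j, f (X j))) S - fourierCoeff f S
      = (∑ j, (f (X j) * walsh S (X j) - (∑ y, f y * walsh S y) / 2 ^ n)) / Q := by
    rw [Finset.sum_sub_distrib, empCoeff, fourierCoeff]
    simp
    field_simp
  rw [e, lt_abs] at hX
  refine hX.imp (fun h => ?_) fun h => ?_
  · rw [lt_div_iff₀ hQ'] at h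
    linarith
  · rw [← neg_div, lt_div_iff₀ hQ', ← Finset.sum_neg_distrib] at h
    rw [mul_comm]
    refine h.le.trans (le_of_eq (Finset.sum_congr rfl fun j _ => ?_))
    rw [Finset.sum_neg_distrib]
    ring

/-- Union bound: all the empirical coefficients indexed by `𝒮` are simultaneously accurate. -/
lemma card_good_ge {n Q : ℕ} (hQ : 0 < Q) {f : (Fin n → Bool) → ℝ} (hf : Bounded1 f)
    (𝒮 : Finset (Finset (Fin n))) {b δ : ℝ} (hb : 0 ≤ b)
    (hδ : #𝒮 * (2 * Real.exp (-(Q * b ^ 2 / 2))) ≤ δ) :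
    (1 - δ) * ((2 : ℝ) ^ n) ^ Q ≤
      (#{X : Fin Q → Fin n → Bool |
        ∀ S ∈ 𝒮, |empCoeff (fun j => (X j, f (X j))) S - fourierCoeff f S| ≤ b} : ℝ) := by
  classical
  set P : (Fin Q → Fin n → Bool) → Prop := fun X =>
    ∀ S ∈ 𝒮, |empCoeff (fun j => (X j, f (X j))) S - fourierCoeff f S| ≤ b with hP
  have htot := Finset.card_filter_add_card_filter_not (s := Finset.univ) P
  have hbad : (#{X | ¬ P X} : ℝ) ≤ δ * ((2 : ℝ) ^ n) ^ Q := by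
    calc (#{X | ¬ P X} : ℝ)
        ≤ ((∑ S ∈ 𝒮, #{X : Fin Q → Fin n → Bool |
            b < |empCoeff (fun j => (X j, f (X j))) S - fourierCoeff f S|} : ℕ) : ℝ) := by
          rw [Nat.cast_le]
          refine le_trans (Finset.card_le_card fun X hX => ?_) Finset.card_biUnion_le
          simpa [hP] using hX
      _ ≤ ∑ S ∈ 𝒮, 2 * (((2 : ℝ) ^ n) ^ Q * Real.exp (-(Q * b ^ 2 / 2))) := by
          push_cast
          exact Finset.sum_le_sum fun S _ => card_bad_le hQ hf S hb
      _ = #𝒮 * (2 * Real.exp (-(Q * b ^ 2 / 2))) * ((2 : ℝ) ^ n) ^ Q := by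
          rw [Finset.sum_const, nsmul_eq_mul]
          ring
      _ ≤ _ := mul_le_mul_of_nonneg_right hδ (by positivity)
  have htot' : (#{X | P X} : ℝ) + (#{X | ¬ P X} : ℝ) = ((2 : ℝ) ^ n) ^ Q := by
    rw [← Nat.cast_add, htot]
    simp
  simp only [hP] at htot' hbad
  linarith

/-! ### Hard thresholding -/

/-- Hard thresholding at level `2b`. -/
noncomputable def thresh (b a : ℝ) : ℝ := if 2 * b ≤ |a| then a else 0

lemma thresh_sub_sq_le {b a c : ℝ} (h : |a - c| ≤ b) : (thresh b a - c) ^ 2 ≤ 9 * b ^ 2 := by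
  have hb : 0 ≤ b := (abs_nonneg _).trans h
  have : |thresh b a - c| ≤ 3 * b := by
    unfold thresh
    split_ifs with h2
    · linarith
    · rw [zero_sub, abs_neg]
      have := abs_sub_abs_le_abs_sub c a
      rw [abs_sub_comm] at this
      linarith
  calc (thresh b a - c) ^ 2 ≤ (3 * b) ^ 2 := sq_le_sq' (by linarith [(abs_le.mp this).1])
        (abs_le.mp this).2
    _ = _ := by ring

/-- Thresholding never does worse than discarding the coefficient. -/
lemma threshold_sq_le {b a c : ℝ} (h : |a - c| ≤ b) : (thresh b a - c) ^ 2 ≤ c ^ 2 := by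
  rw [sq_le_sq]
  unfold thresh
  split_ifs with h2
  · have := abs_sub_abs_le_abs_sub a c
    linarith
  · simp

/-- The number of sets of size at most `m` contained in `σ`. -/
lemma card_subsets_le {α : Type*} [Fintype α] [DecidableEq α] (σ : Finset α) (m : ℕ) :
    #{S : Finset α | #S ≤ m ∧ S ⊆ σ} = ∑ r ∈ Finset.range (m + 1), (#σ).choose r := by
  have : ({S : Finset α | #S ≤ m ∧ S ⊆ σ} : Finset (Finset α))
      = (Finset.range (m + 1)).biUnion fun r => σ.powersetCard r := by
    ext S
    simp [Finset.mem_powersetCard, and_comm]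
  rw [this, Finset.card_biUnion]
  · simp
  · intro i _ j _ hij
    exact Finset.pairwise_disjoint_powersetCard σ hij

/-- The hypothesis produced from a labelled sample: the Walsh polynomial of degree at most `m`
whose coefficients are the empirical ones, thresholded at level `2b`. -/
noncomputable def learner {n : ℕ} (m : ℕ) (b : ℝ) {Q : ℕ} (D : Fin Q → (Fin n → Bool) × ℝ) :
    (Fin n → Bool) → ℝ :=
  fun x => ∑ S, (if #S ≤ m then thresh b (empCoeff D S) else 0) * walsh S x

/-- Accurate empirical coefficients give an accurate hypothesis, deterministically. -/
lemma dist2_learner_le {n k d : ℕ} {η b : ℝ} {f : (Fin n → Bool) → ℝ} (hd : DegLE n d f)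
    (hJ : Junta n k η f) {Q : ℕ} {D : Fin Q → (Fin n → Bool) × ℝ}
    (hD : ∀ S : Finset (Fin n), #S ≤ min d k → |empCoeff D S - fourierCoeff f S| ≤ b) :
    dist2 (learner (min d k) b D) f
      ≤ η + 9 * b ^ 2 * ∑ r ∈ Finset.range (min d k + 1), (k.choose r : ℝ) := by
  obtain ⟨σ, hσ, g, hg, hfg⟩ := hJ
  unfold learner
  rw [dist2_walsh_poly, ← Finset.sum_filter_add_sum_filter_not _ (fun S => ¬ S ⊆ σ)]
  refine add_le_add ?_ ?_
  · refine le_trans (Finset.sum_le_sum fun S _ => ?_) (junta_tail_le hg hfg)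
    split_ifs with h
    · exact threshold_sq_le (hD S h)
    · simp
  · calc _ ≤ ∑ S with ¬ ¬ S ⊆ σ, (if #S ≤ min d k then 9 * b ^ 2 else 0) := by
          refine Finset.sum_le_sum fun S hS => ?_
          split_ifs with h
          · exact thresh_sub_sq_le (hD S h)
            -- A subset of `σ` has size at most `k`, so size above `min d k` means above `d`.
          · have hSk := (Finset.card_le_card (not_not.mp (Finset.mem_filter.mp hS).2)).trans hσ
            have : d < #S := by omega
            simp [hd S this]
      _ = 9 * b ^ 2 * (#{S : Finset (Fin n) | #S ≤ min d k ∧ S ⊆ σ} : ℝ) := by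
          rw [← Finset.sum_filter, Finset.filter_filter, Finset.sum_const, nsmul_eq_mul, mul_comm]
          simp only [not_not, and_comm]
      _ ≤ _ := by
          refine mul_le_mul_of_nonneg_left ?_ (by positivity)
          rw [card_subsets_le, Nat.cast_sum]
          exact Finset.sum_le_sum fun r _ => Nat.cast_le.mpr (Nat.choose_le_choose r hσ)

end EIS

/-- **Corollary 1.3 (first part).** For `n, k ∈ ℕ`, `d ∈ {1,…,n}` and `η ∈ [0,1)`,
`Q_r(F_{n,d} ∩ J_{n,k,η}, 2η + ε, δ)
  ≤ ⌈(18/ε)·Σ_{r=0}^{min(d,k)} C(k,r)·log((2/δ)·Σ_{r=0}^{min(d,k)} C(n,r))⌉`. -/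
theorem stmt3 (n k d : ℕ) (hd1 : 1 ≤ d) (hdn : d ≤ n) (η : ℝ) (hη0 : 0 ≤ η) (hη1 : η < 1)
    (ε δ : ℝ) (hε0 : 0 < ε) (hε1 : ε < 1) (hδ0 : 0 < δ) (hδ1 : δ < 1) :
    ∃ (Q : ℕ) (H : (Fin Q → (Fin n → Bool) × ℝ) → ((Fin n → Bool) → ℝ)),
      RandLearns Q H (Fclass n d ∩ Jclass n k η) (2 * η + ε) δ ∧
      Q ≤ ⌈18 / ε * (∑ r ∈ Finset.range (min d k + 1), (k.choose r : ℝ)) *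
            Real.log (2 / δ * ∑ r ∈ Finset.range (min d k + 1), (n.choose r : ℝ))⌉₊ := by
  classical
  set M : ℝ := ∑ r ∈ Finset.range (min d k + 1), (k.choose r : ℝ) with hM
  set N : ℝ := ∑ r ∈ Finset.range (min d k + 1), (n.choose r : ℝ) with hN
  have one_le : ∀ a : ℕ, (1 : ℝ) ≤ ∑ r ∈ Finset.range (min d k + 1), (a.choose r : ℝ) := by
    intro a
    have := Finset.single_le_sum (f := fun r => (a.choose r : ℝ)) (fun _ _ => by positivity)
      (Finset.mem_range.mpr (Nat.succ_pos (min d k)))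
    simpa using this
  have hM1 : 1 ≤ M := one_le k
  have hN1 : 1 ≤ N := one_le n
  have hM0 : 0 < M := by linarith
  have hlog : 0 < Real.log (2 / δ * N) := by
    apply Real.log_pos
    have : 1 < 2 / δ := by
      rw [lt_div_iff₀ hδ0]
      linarith
    nlinarith
  set Q : ℕ := ⌈18 / ε * M * Real.log (2 / δ * N)⌉₊ with hQdef
  have hQ : 0 < Q := Nat.ceil_pos.mpr (by positivity)
  set b : ℝ := Real.sqrt (ε / (9 * M)) with hbdef
  have hb2 : b ^ 2 = ε / (9 * M) := Real.sq_sqrt (by positivity)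
  refine ⟨Q, learner (min d k) b, ?_, le_rfl⟩
  rintro f ⟨⟨hf, hdeg⟩, -, hJ⟩
  have hcard : ((#{S : Finset (Fin n) | #S ≤ min d k} : ℕ) : ℝ) = N := by
    have h := card_subsets_le (Finset.univ : Finset (Fin n)) (min d k)
    simp only [Finset.subset_univ, and_true, Finset.card_univ, Fintype.card_fin] at h
    rw [h, Nat.cast_sum]
  have hexp : ((#{S : Finset (Fin n) | #S ≤ min d k} : ℕ) : ℝ) *
      (2 * Real.exp (-(Q * b ^ 2 / 2))) ≤ δ := by
    have h1 : Real.log (2 / δ * N) ≤ Q * b ^ 2 / 2 := by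
      have h := Nat.le_ceil (18 / ε * M * Real.log (2 / δ * N))
      rw [← hQdef] at h
      calc Real.log (2 / δ * N)
          = (18 / ε * M * Real.log (2 / δ * N)) * b ^ 2 / 2 := by
            rw [hb2]
            field_simp
            ring
        _ ≤ _ := by gcongr
    have h2 : Real.exp (-(Q * b ^ 2 / 2)) ≤ (2 / δ * N)⁻¹ := by
      rw [Real.exp_neg]
      apply inv_anti₀ (by positivity)
      rwa [← Real.log_le_iff_le_exp (by positivity)]
    rw [hcard]
    calc N * (2 * Real.exp (-(Q * b ^ 2 / 2))) ≤ N * (2 * (2 / δ * N)⁻¹) := by gcongr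
      _ = δ := by field_simp
  refine (card_good_ge hQ hf _ (Real.sqrt_nonneg _) hexp).trans ?_
  rw [Nat.card_eq_fintype_card, Fintype.card_subtype, Nat.cast_le]
  refine Finset.card_le_card fun X hX => ?_
  simp only [Finset.mem_filter, Finset.mem_univ, true_and] at hX ⊢
  refine (dist2_learner_le hdeg hJ hX).trans ?_
  have : 9 * b ^ 2 * M = ε := by
    rw [hb2]
    field_simp
  rw [← hM, this]
  linarith
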